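/- Let F be a division ring, G a division subring of F, and (f_i)_{i∈ℕ} a sequence in F with f_0 = 1 satisfying axioms (T4), (T5), (T6). Then for every k ≥ 1 there exists b ∈ D_k with b ∉ S_k such that every x ∈ D_k can be written uniquely as x = s + b·t with s, t ∈ S_k; that is, {1, b} is a basis of D_k as a right S_k-vector space and D_k has right dimension 2 over S_k. -/

import Mathlib

/-- `L_k`: the left `G`-subspace of `F` spanned by `f_0, …, f_k`. -/
def Lset {F : Type*} [DivisionRing F] (G : Subring F) (f : ℕ → F) (k : ℕ) : Set F :=
  {x | ∃ c : ℕ → F, (∀ i, c i ∈ G) ∧ x = ∑ i ∈ Finset.range (k + 1), c i * f i}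

/-- `S_k = {a ∈ F : L_k · a ⊆ L_k}`. -/
def Sset {F : Type*} [DivisionRing F] (G : Subring F) (f : ℕ → F) (k : ℕ) : Set F :=
  {a | ∀ x ∈ Lset G f k, x * a ∈ Lset G f k}

/-- `D_0 = F`, and `D_k = {a ∈ F : L_{k-1} · a ⊆ L_k}` for `k ≥ 1`. -/
def Dset {F : Type*} [DivisionRing F] (G : Subring F) (f : ℕ → F) : ℕ → Set F
  | 0 => Set.univ
  | k + 1 => {a | ∀ x ∈ Lset G f k, x * a ∈ Lset G f (k + 1)}


theorem aux_add {F : Type*} [DivisionRing F] (G : Subring F) (f : ℕ → F) (k : ℕ) {x y : F}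
    (hx : x ∈ Lset G f k) (hy : y ∈ Lset G f k) : x + y ∈ Lset G f k := by
  obtain ⟨c, hc, rfl⟩ := hx
  obtain ⟨d, hd, rfl⟩ := hy
  exact ⟨fun i => c i + d i, fun i => G.add_mem (hc i) (hd i), by
    simp [add_mul, Finset.sum_add_distrib]⟩

theorem aux_smul {F : Type*} [DivisionRing F] (G : Subring F) (f : ℕ → F) (k : ℕ) {g x : F}
    (hg : g ∈ G) (hx : x ∈ Lset G f k) : g * x ∈ Lset G f k := by
  obtain ⟨c, hc, rfl⟩ := hx
  exact ⟨fun i => g * c i, fun i => G.mul_mem hg (hc i), by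
    simp [Finset.mul_sum, mul_assoc]⟩

theorem aux_sub {F : Type*} [DivisionRing F] (G : Subring F) (f : ℕ → F) (k : ℕ) {x y : F}
    (hx : x ∈ Lset G f k) (hy : y ∈ Lset G f k) : x - y ∈ Lset G f k := by
  have := aux_smul G f k (G.neg_mem G.one_mem) hy
  have := aux_add G f k hx this
  simpa [sub_eq_add_neg] using this

theorem auxS_sub {F : Type*} [DivisionRing F] (G : Subring F) (f : ℕ → F) (k : ℕ) {x y : F}
    (hx : x ∈ Sset G f k) (hy : y ∈ Sset G f k) : x - y ∈ Sset G f k := by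
  intro z hz
  rw [mul_sub]
  exact aux_sub G f k (hx z hz) (hy z hz)

theorem aux_memi {F : Type*} [DivisionRing F] (G : Subring F) (f : ℕ → F) (k i : ℕ)
    (hi : i < k + 1) : f i ∈ Lset G f k := by
  classical
  refine ⟨fun j => if j = i then 1 else 0, fun j => ?_, ?_⟩
  · dsimp only
    split_ifs
    exacts [G.one_mem, G.zero_mem]
  · simp; omega

theorem aux_mem {F : Type*} [DivisionRing F] (G : Subring F) (f : ℕ → F) (k : ℕ) :
    f k ∈ Lset G f k := aux_memi G f k k (by omega)

theorem aux_mono {F : Type*} [DivisionRing F] (G : Subring F) (f : ℕ → F) (k : ℕ) (x : F)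
    (hx : x ∈ Lset G f k) : x ∈ Lset G f (k + 1) := by
  classical
  obtain ⟨c, hc, rfl⟩ := hx
  refine ⟨fun j => if j = k + 1 then 0 else c j, fun j => ?_, ?_⟩
  · dsimp only
    split_ifs
    exacts [G.zero_mem, hc j]
  · rw [Finset.sum_range_succ _ (k + 1)]
    simp only [if_true, zero_mul, add_zero]
    refine Finset.sum_congr rfl fun j hj => ?_
    rw [if_neg]
    have := Finset.mem_range.mp hj
    omega

theorem aux_notMem {F : Type*} [DivisionRing F] (G : Subring F) (f : ℕ → F)
    (T5 : ∀ c : ℕ → F, (∀ i, c i ∈ G) →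
      ∀ m : ℕ, ∑ i ∈ Finset.range m, c i * f i = 0 → ∀ i < m, c i = 0) (k : ℕ) :
    f (k + 1) ∉ Lset G f k := by
  classical
  rintro ⟨c, hc, h⟩
  have := T5 (fun j => if j = k + 1 then -1 else c j) (fun j => by
    split_ifs
    exacts [G.neg_mem G.one_mem, hc j]) (k + 2) (by
    rw [Finset.sum_range_succ _ (k + 1)]
    have : ∑ x ∈ Finset.range (k + 1), (if x = k + 1 then -1 else c x) * f x = f (k + 1) := by
      rw [h]
      refine Finset.sum_congr rfl fun j hj => ?_
      rw [if_neg]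
      have := Finset.mem_range.mp hj
      omega
    rw [this]; simp) (k + 1) (by omega)
  simp at this

theorem aux_inv {F : Type*} [DivisionRing F] (G : Subring F) (hG : ∀ x ∈ G, x⁻¹ ∈ G)
    (f : ℕ → F) (k : ℕ) {a : F} (ha : a ∈ Sset G f k) (h0 : a ≠ 0) : a⁻¹ ∈ Sset G f k := by
  let K : Subfield F := { G with inv_mem' := hG }
  let L : Submodule K F :=
    { carrier := Lset G f k
      add_mem' := fun hx hy => aux_add G f k hx hy
      zero_mem' := ⟨fun _ => 0, fun _ => G.zero_mem, by simp⟩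
      smul_mem' := fun g x hx => aux_smul G f k g.2 hx }
  have hfin : L = Submodule.span K (f '' (Finset.range (k + 1) : Set ℕ)) := by
    apply le_antisymm
    · rintro x ⟨c, hc, rfl⟩
      refine Submodule.sum_mem _ fun i hi => ?_
      exact Submodule.smul_mem _ (⟨c i, hc i⟩ : K) (Submodule.subset_span ⟨i, hi, rfl⟩)
    · rw [Submodule.span_le]
      rintro _ ⟨i, hi, rfl⟩
      exact aux_memi G f k i (by simpa using hi)
  have : FiniteDimensional K L := by
    rw [hfin]
    exact FiniteDimensional.span_of_finite K ((Finset.finite_toSet _).image f)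
  let φ : L →ₗ[K] L :=
    { toFun := fun x => ⟨x.1 * a, ha x.1 x.2⟩
      map_add' := fun x y => Subtype.ext (add_mul x.1 y.1 a)
      map_smul' := fun g x => Subtype.ext (mul_assoc g.1 x.1 a) }
  have hinj : Function.Injective φ := by
    intro x y h
    exact Subtype.ext (mul_right_cancel₀ h0 (congrArg Subtype.val h))
  intro x hx
  obtain ⟨y, hy⟩ := LinearMap.surjective_of_injective hinj ⟨x, hx⟩
  have hy' : y.1 * a = x := congrArg Subtype.val hy
  rw [← hy', mul_assoc, mul_inv_cancel₀ h0, mul_one]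
  exact y.2

theorem aux_step {F : Type*} [DivisionRing F] (G : Subring F) (hG : ∀ x ∈ G, x⁻¹ ∈ G)
    (f : ℕ → F)
    (T5 : ∀ c : ℕ → F, (∀ i, c i ∈ G) →
      ∀ m : ℕ, ∑ i ∈ Finset.range m, c i * f i = 0 → ∀ i < m, c i = 0) (k : ℕ)
    (ih : ∃ c : F, ∀ x : F, ∃ l ∈ Lset G f k, ∃ s ∈ Sset G f k, x = l + c * s) (y : F) :
    ∃ l ∈ Lset G f k, ∃ s ∈ Sset G f k, y = l + f (k + 1) * s := by
  obtain ⟨c, hc⟩ := ih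
  obtain ⟨l, hl, s, hs, h⟩ := hc (f (k + 1))
  obtain ⟨l', hl', s', hs', h'⟩ := hc y
  have hs0 : s ≠ 0 := by
    rintro rfl
    apply aux_notMem G f T5 k
    rw [h]; simpa using hl
  have hu : s⁻¹ * s' ∈ Sset G f k := by
    intro x hx
    rw [← mul_assoc]
    exact hs' _ (aux_inv G hG f k hs hs0 x hx)
  refine ⟨l' - l * (s⁻¹ * s'), aux_sub G f k hl' (hu l hl), s⁻¹ * s', hu, ?_⟩
  have : c * s * (s⁻¹ * s') = c * s' := by
    rw [mul_assoc, ← mul_assoc s, mul_inv_cancel₀ hs0, one_mul]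
  rw [h, h', add_mul, this]
  abel

/-- In a model of the theory `T`, `{1, b}` is a basis of `D_k` as a right `S_k`-vector
space for a suitable `b ∈ D_k \ S_k`; in particular `dim (D_k)_{S_k} = 2`. -/
theorem stmt10 {F : Type*} [DivisionRing F]
    (G : Subring F) (hG : ∀ x ∈ G, x⁻¹ ∈ G)
    (f : ℕ → F) (hf0 : f 0 = 1)
    (T4 : ∀ x : F, ∃ a ∈ G, ∃ b ∈ G, x = a + f 1 * b)
    (T5 : ∀ c : ℕ → F, (∀ i, c i ∈ G) →
      ∀ m : ℕ, ∑ i ∈ Finset.range m, c i * f i = 0 → ∀ i < m, c i = 0)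
    (T6 : ∀ k : ℕ, 1 ≤ k → ∃ b ∈ Dset G f k,
      ∀ x ∈ Dset G f k, ∃ s ∈ Sset G f k, ∃ t ∈ Sset G f k, x = s + b * t) :
    ∀ k : ℕ, 1 ≤ k → ∃ b ∈ Dset G f k, b ∉ Sset G f k ∧
      ∀ x ∈ Dset G f k, ∃ s ∈ Sset G f k, ∃ t ∈ Sset G f k, (x = s + b * t ∧
        ∀ s' t' : F, s' ∈ Sset G f k → t' ∈ Sset G f k → x = s' + b * t' →
          s' = s ∧ t' = t) := by
  have hS0 : ∀ a ∈ G, a ∈ Sset G f 0 := by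
    rintro a ha x ⟨c, hc, rfl⟩
    refine ⟨fun i => c i * a, fun i => G.mul_mem (hc i) ha, ?_⟩
    simp [hf0]
  have key : ∀ k : ℕ, ∃ c : F, ∀ x : F, ∃ l ∈ Lset G f k, ∃ s ∈ Sset G f k, x = l + c * s := by
    intro k
    induction k with
    | zero =>
      refine ⟨f 1, fun x => ?_⟩
      obtain ⟨a, ha, b, hb, h⟩ := T4 x
      exact ⟨a, ⟨fun _ => a, fun _ => ha, by simp [hf0]⟩, b, hS0 b hb, h⟩
    | succ k ih =>
      obtain ⟨b, -, hb⟩ := T6 (k+1) (by omega)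
      refine ⟨f (k+1) * b, fun y => ?_⟩
      obtain ⟨l, hl, t, ht, h⟩ := aux_step G hG f T5 k ih y
      obtain ⟨s1, hs1, s2, hs2, h2⟩ := hb t (fun x hx => aux_mono G f k _ (ht x hx))
      refine ⟨l + f (k+1) * s1, aux_add G f _ (aux_mono G f k _ hl) (hs1 _ (aux_mem G f (k+1))),
        s2, hs2, ?_⟩
      rw [h, h2]; noncomm_ring
  intro k hk
  obtain ⟨b, hbD, hb⟩ := T6 k hk
  have hbS : b ∉ Sset G f k := by
    intro hbS
    obtain ⟨k, rfl⟩ : ∃ j, k = j + 1 := ⟨k - 1, by omega⟩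
    obtain ⟨l, hl, t, ht, h⟩ := aux_step G hG f T5 k (key k) (f (k+2))
    obtain ⟨s1, hs1, s2, hs2, h2⟩ := hb t (fun x hx => aux_mono G f k _ (ht x hx))
    apply aux_notMem G f T5 (k+1)
    rw [h, h2, mul_add, ← mul_assoc]
    have hm := aux_mem G f (k+1)
    exact aux_add G f _ (aux_mono G f k _ hl)
      (aux_add G f _ (hs1 _ hm) (hs2 _ (hbS _ hm)))
  refine ⟨b, hbD, hbS, fun x hx => ?_⟩
  obtain ⟨s, hs, t, ht, h⟩ := hb x hx
  refine ⟨s, hs, t, ht, h, fun s' t' hs' ht' h' => ?_⟩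
  have e : b * (t' - t) = s - s' := by
    rw [mul_sub, sub_eq_sub_iff_add_eq_add, add_comm (b * t'), ← h', h]
  have htt : t' - t = 0 := by
    by_contra hne
    apply hbS
    have hinv := aux_inv G hG f k (auxS_sub G f k ht' ht) hne
    have : b = (s - s') * (t' - t)⁻¹ := by
      rw [← e, mul_assoc, mul_inv_cancel₀ hne, mul_one]
    rw [this]
    intro x hx
    rw [← mul_assoc]
    exact hinv _ (auxS_sub G f k hs hs' x hx)
  rw [htt, mul_zero] at e
  exact ⟨(sub_eq_zero.mp e.symm).symm, sub_eq_zero.mp htt⟩
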